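/- arXiv:1410.6271 — 3 statements merged into one kernel-verified Lean document; each statement's English description precedes it below -/
import Mathlib

section
/- Let d ≥ 1 and a, b : Fin d → ℝ with a i < b i for every i, and let D = {y ∈ EuclideanSpace ℝ (Fin d) : ∀ i, a i ≤ y i ≤ b i}. Then for every x ∈ D and every δ > 0, the Lebesgue measure of Metric.ball x δ ∩ D is at least ∏ i, min (δ / Real.sqrt d) (b i - a i). -/
open MeasureTheory

/-!
Put `r = δ / √d` and `m i = min r (b i - a i)`. The open interval of length `m i` starting at
`l i = max (a i) (x i - m i)` lies in `[a i, b i]` and within distance `m i ≤ r` of `x i`.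
The product of these intervals is therefore contained in `D`, and in the ball because
`∑ i, (y i - x i) ^ 2 < d * r ^ 2 = δ ^ 2` on it; its volume is `∏ i, m i`.
-/

theorem ball_box_inter_volume_lower_bound
    (d : ℕ) (hd : 1 ≤ d) (a b : Fin d → ℝ) (hab : ∀ i, a i < b i)
    (D : Set (EuclideanSpace ℝ (Fin d)))
    (hD : D = {y : EuclideanSpace ℝ (Fin d) | ∀ i, a i ≤ y i ∧ y i ≤ b i})
    (x : EuclideanSpace ℝ (Fin d)) (hx : x ∈ D) (δ : ℝ) (hδ : 0 < δ) :
    ENNReal.ofReal (∏ i, min (δ / Real.sqrt d) (b i - a i)) ≤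
      volume (Metric.ball x δ ∩ D) := by
  subst hD
  have hd0 : (0 : ℝ) < d := by exact_mod_cast hd
  have hr : 0 < δ / Real.sqrt d := div_pos hδ (Real.sqrt_pos.2 hd0)
  have hrsq : (d : ℝ) * (δ / Real.sqrt d) ^ 2 = δ ^ 2 := by
    rw [div_pow, Real.sq_sqrt hd0.le]
    field_simp
  generalize δ / Real.sqrt d = r at hr hrsq ⊢
  set m : Fin d → ℝ := fun i => min r (b i - a i) with hm
  have hm0 : ∀ i, 0 ≤ m i := fun i => le_min hr.le (sub_nonneg.2 (hab i).le)
  set l : Fin d → ℝ := fun i => max (a i) (x i - m i) with hl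
  have hvol : volume (Set.univ.pi fun i => Set.Ioo (l i) (l i + m i)) =
      ENNReal.ofReal (∏ i, m i) := by
    rw [Real.volume_pi_Ioo, ENNReal.ofReal_prod_of_nonneg fun i _ => hm0 i]
    simp
  change ENNReal.ofReal (∏ i, m i) ≤ _
  rw [← hvol, ← (PiLp.volume_preserving_ofLp (Fin d)).measure_preimage
    (MeasurableSet.univ_pi fun i => measurableSet_Ioo).nullMeasurableSet]
  refine measure_mono fun y hy => ?_
  have hy' : ∀ i, l i < y i ∧ y i < l i + m i := fun i => hy i (Set.mem_univ i)
  have key : ∀ i, (a i ≤ y i ∧ y i ≤ b i) ∧ |y i - x i| < r := by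
    intro i
    obtain ⟨h1, h2⟩ := hy' i
    obtain ⟨h3, h4⟩ := hx i
    have hmr : m i ≤ r := min_le_left _ _
    have hmb : m i ≤ b i - a i := min_le_right _ _
    have hla : a i ≤ l i := le_max_left _ _
    have hlx : x i - m i ≤ l i := le_max_right _ _
    have hlb : l i ≤ b i - m i := max_le (by linarith) (by linarith)
    have hlx' : l i ≤ x i := max_le h3 (by linarith [hm0 i])
    exact ⟨⟨by linarith, by linarith⟩, abs_lt.2 ⟨by linarith, by linarith⟩⟩
  refine ⟨?_, fun i => (key i).1⟩
  rw [Metric.mem_ball, EuclideanSpace.dist_eq, Real.sqrt_lt' hδ, ← hrsq]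
  -- strictness of the summed inequality needs a nonempty index set, i.e. `1 ≤ d`
  have : Nonempty (Fin d) := ⟨⟨0, hd⟩⟩
  calc ∑ i, dist (y i) (x i) ^ 2 < ∑ _i : Fin d, r ^ 2 := by
        refine Finset.sum_lt_sum_of_nonempty Finset.univ_nonempty fun i _ => ?_
        rw [Real.dist_eq]
        exact pow_lt_pow_left₀ (key i).2 (abs_nonneg _) two_ne_zero
    _ = d * r ^ 2 := by simp
end

section
/- Let d ≥ 1 and a, b : Fin d → ℝ with a i < b i for every i, and let D = {y ∈ EuclideanSpace ℝ (Fin d) : ∀ i, a i ≤ y i ≤ b i}. Let ν be a probability measure on EuclideanSpace ℝ (Fin d) that has a density g with respect to Lebesgue measure (ν = volume.withDensity g), and suppose there is c > 0 with g y ≥ c for Lebesgue-almost every y ∈ D. Then for every x ∈ D and every δ > 0, ν(Metric.ball x δ ∩ D) ≥ c · ∏ i, min (δ / Real.sqrt d) (b i - a i); in particular ν(Metric.ball x δ ∩ D) > 0. -/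
/-!
Write `m i = min (δ / √d) (b i - a i)`. The open box with lower corner `max (a i) (x i - m i)` and
side lengths `m i` lies in `D`, and each of its points differs from `x` by less than `δ / √d` in
every coordinate, hence lies in the ball. Its volume is `∏ i, m i > 0`, and integrating `g ≥ c` over
the intersection gives both claims.
-/

open MeasureTheory ENNReal

/-- A vector with all coordinates below `δ / √d` in absolute value has Euclidean norm below `δ`;
strictness needs `d ≠ 0`. -/
lemma mem_ball_of_coord_lt {d : ℕ} (hd : 1 ≤ d) {δ : ℝ} (hδ : 0 < δ)
    (x y : EuclideanSpace ℝ (Fin d)) (h : ∀ i, |y i - x i| < δ / Real.sqrt d) :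
    y ∈ Metric.ball x δ := by
  have hd0 : (0 : ℝ) < d := by exact_mod_cast hd
  have : Nonempty (Fin d) := ⟨⟨0, hd⟩⟩
  rw [Metric.mem_ball, EuclideanSpace.dist_eq, Real.sqrt_lt' hδ]
  calc ∑ i, dist (y i) (x i) ^ 2 < ∑ _i : Fin d, δ ^ 2 / d := by
        refine Finset.sum_lt_sum_of_nonempty Finset.univ_nonempty fun i _ => ?_
        rw [Real.dist_eq]
        calc |y i - x i| ^ 2 < (δ / Real.sqrt d) ^ 2 :=
              pow_lt_pow_left₀ (h i) (abs_nonneg _) two_ne_zero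
          _ = δ ^ 2 / d := by rw [div_pow, Real.sq_sqrt hd0.le]
    _ = δ ^ 2 := by
        simp only [Finset.sum_const, Finset.card_univ, Fintype.card_fin, nsmul_eq_mul]
        field_simp

lemma ofReal_prod_le_volume_ball_inter_box {d : ℕ} (hd : 1 ≤ d) {a b : Fin d → ℝ}
    (hab : ∀ i, a i < b i) {x : EuclideanSpace ℝ (Fin d)} (hx : ∀ i, a i ≤ x i ∧ x i ≤ b i)
    {δ : ℝ} (hδ : 0 < δ) :
    ENNReal.ofReal (∏ i, min (δ / Real.sqrt d) (b i - a i)) ≤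
      volume (Metric.ball x δ ∩ {y : EuclideanSpace ℝ (Fin d) | ∀ i, a i ≤ y i ∧ y i ≤ b i}) := by
  have hd0 : (0 : ℝ) < d := by exact_mod_cast hd
  set m : Fin d → ℝ := fun i => min (δ / Real.sqrt d) (b i - a i) with hm
  have hm0 : ∀ i, 0 < m i := fun i => lt_min (by positivity) (sub_pos.2 (hab i))
  set l : Fin d → ℝ := fun i => max (a i) (x i - m i) with hl
  have hvol : volume ((WithLp.ofLp : EuclideanSpace ℝ (Fin d) → Fin d → ℝ) ⁻¹'
      Set.univ.pi fun i => Set.Ioo (l i) (l i + m i)) = ENNReal.ofReal (∏ i, m i) := by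
    rw [(PiLp.volume_preserving_ofLp (Fin d)).measure_preimage
      (MeasurableSet.univ_pi fun i => measurableSet_Ioo).nullMeasurableSet, Real.volume_pi_Ioo,
      ENNReal.ofReal_prod_of_nonneg fun i _ => (hm0 i).le]
    simp
  rw [← hvol]
  refine measure_mono fun y hy => ?_
  have hy' : ∀ i, l i < y i ∧ y i < l i + m i := fun i => hy i (Set.mem_univ i)
  have h1 : ∀ i, a i ≤ l i := fun i => le_max_left _ _
  have h2 : ∀ i, x i - m i ≤ l i := fun i => le_max_right _ _
  have h3 : ∀ i, m i ≤ b i - a i := fun i => min_le_right _ _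
  have h4 : ∀ i, l i ≤ x i := fun i => max_le (hx i).1 (by linarith [hm0 i])
  have h5 : ∀ i, l i ≤ b i - m i := fun i =>
    max_le (by linarith [h3 i]) (by linarith [(hx i).2])
  refine ⟨mem_ball_of_coord_lt hd hδ x y fun i => ?_, fun i => ⟨?_, ?_⟩⟩
  · refine lt_of_lt_of_le (abs_lt.2 ⟨?_, ?_⟩) (min_le_left _ (b i - a i) : m i ≤ _)
    · linarith [(hy' i).1, h2 i]
    · linarith [(hy' i).2, h4 i]
  · linarith [(hy' i).1, h1 i]
  · linarith [(hy' i).2, h5 i]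

theorem withDensity_ball_box_lower_bound
    (d : ℕ) (hd : 1 ≤ d) (a b : Fin d → ℝ) (hab : ∀ i, a i < b i)
    (D : Set (EuclideanSpace ℝ (Fin d)))
    (hD : D = {y : EuclideanSpace ℝ (Fin d) | ∀ i, a i ≤ y i ∧ y i ≤ b i})
    (g : EuclideanSpace ℝ (Fin d) → ℝ≥0∞)
    (ν : Measure (EuclideanSpace ℝ (Fin d)))
    (hν : ν = volume.withDensity g) (hprob : IsProbabilityMeasure ν)
    (c : ℝ≥0∞) (hc : 0 < c)
    (hg : ∀ᵐ y ∂(volume : Measure (EuclideanSpace ℝ (Fin d))), y ∈ D → c ≤ g y)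
    (x : EuclideanSpace ℝ (Fin d)) (hx : x ∈ D) (δ : ℝ) (hδ : 0 < δ) :
    c * ENNReal.ofReal (∏ i, min (δ / Real.sqrt d) (b i - a i)) ≤
        ν (Metric.ball x δ ∩ D) ∧
      0 < ν (Metric.ball x δ ∩ D) := by
  have hd0 : (0 : ℝ) < d := by exact_mod_cast hd
  have hDm : MeasurableSet D := by
    have : D = ⋂ i, {y : EuclideanSpace ℝ (Fin d) | a i ≤ y i ∧ y i ≤ b i} := by
      rw [hD]; ext y; simp
    rw [this]
    refine MeasurableSet.iInter fun i => IsClosed.measurableSet ?_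
    have hcont : Continuous fun y : EuclideanSpace ℝ (Fin d) => y i := by fun_prop
    exact (isClosed_le continuous_const hcont).inter (isClosed_le hcont continuous_const)
  have hSm : MeasurableSet (Metric.ball x δ ∩ D) := measurableSet_ball.inter hDm
  have hvol : ENNReal.ofReal (∏ i, min (δ / Real.sqrt d) (b i - a i)) ≤
      volume (Metric.ball x δ ∩ D) := by
    subst hD
    exact ofReal_prod_le_volume_ball_inter_box hd hab hx hδ
  have key : c * ENNReal.ofReal (∏ i, min (δ / Real.sqrt d) (b i - a i)) ≤
      ν (Metric.ball x δ ∩ D) := by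
    rw [hν, withDensity_apply _ hSm]
    calc _ ≤ c * volume (Metric.ball x δ ∩ D) := by gcongr
      _ = ∫⁻ _ in Metric.ball x δ ∩ D, c := (setLIntegral_const _ _).symm
      _ ≤ _ := by
        refine lintegral_mono_ae ((ae_restrict_iff' hSm).2 ?_)
        filter_upwards [hg] with y hy hyS using hy hyS.2
  refine ⟨key, lt_of_lt_of_le (ENNReal.mul_pos hc.ne' ?_) key⟩
  exact (ENNReal.ofReal_pos.2 (Finset.prod_pos fun i _ =>
    lt_min (by positivity) (sub_pos.2 (hab i)))).ne'
end

section
/- Let (Ω, m, μ) be a probability space, ℱ a filtration indexed by ℕ with ℱ n ≤ m for all n, let d ≥ 1, and let Y : ℕ → Ω → EuclideanSpace ℝ (Fin d) be such that Y n is measurable with respect to ℱ n for every n. Fix x* ∈ EuclideanSpace ℝ (Fin d), and suppose that for every δ > 0 there exists ν > 0 such that for all n ≥ 1, ν ≤ μ[({ω | Y n ω ∈ Metric.ball x* δ}).indicator (fun _ => (1:ℝ)) | ℱ (n-1)] holds μ-almost everywhere. Then for μ-almost every ω, for every δ > 0 there are infinitely many n with Y n ω ∈ Metric.ball x* δ.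 -/
/-!
For a fixed radius `δ`, the conditional probabilities of visiting the ball are bounded below by a
constant `ν > 0`, so their sum diverges almost surely, and Lévy's conditional Borel–Cantelli lemma
(`ae_mem_limsup_atTop_iff`) gives infinitely many visits. Applying this to the countably many
radii `1 / (k + 1)` makes the exceptional null set independent of `δ`.
-/

open MeasureTheory Filter

theorem ae_visits_every_ball_infinitely_often
    {Ω : Type*} {m : MeasurableSpace Ω} {μ : Measure Ω} [IsProbabilityMeasure μ]
    (ℱ : Filtration ℕ m)
    (d : ℕ) (hd : 1 ≤ d)
    (Y : ℕ → Ω → EuclideanSpace ℝ (Fin d))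
    (hYmeas : ∀ n, Measurable[ℱ n] (Y n))
    (xstar : EuclideanSpace ℝ (Fin d))
    (hcond : ∀ δ > (0 : ℝ), ∃ ν > (0 : ℝ), ∀ n, 1 ≤ n →
      ∀ᵐ ω ∂μ, ν ≤
        (μ[({ω' | Y n ω' ∈ Metric.ball xstar δ}).indicator (fun _ => (1 : ℝ)) |
          ℱ (n - 1)]) ω) :
    ∀ᵐ ω ∂μ, ∀ δ > (0 : ℝ), ∀ N : ℕ, ∃ n ≥ N, Y n ω ∈ Metric.ball xstar δ := by
  have fixed_radius : ∀ δ > (0 : ℝ), ∀ᵐ ω ∂μ, ∀ N : ℕ, ∃ n ≥ N, Y n ω ∈ Metric.ball xstar δ := by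
    intro δ hδ
    obtain ⟨ν, hν, hbound⟩ := hcond δ hδ
    have hs : ∀ n, MeasurableSet[ℱ n] {ω | Y n ω ∈ Metric.ball xstar δ} :=
      fun n => hYmeas n measurableSet_ball
    have hall : ∀ᵐ ω ∂μ, ∀ k : ℕ, ν ≤
        (μ[({ω' | Y (k + 1) ω' ∈ Metric.ball xstar δ}).indicator (1 : Ω → ℝ) | ℱ k]) ω :=
      ae_all_iff.2 fun k => hbound (k + 1) (Nat.le_add_left 1 k)
    filter_upwards [ae_mem_limsup_atTop_iff μ hs, hall] with ω hiff hω
    have hlim := hiff.2 <| tendsto_atTop_mono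
      (fun n => by
        simpa using Finset.card_nsmul_le_sum (Finset.range n) _ ν fun k _ => hω k)
      (tendsto_natCast_atTop_atTop.atTop_mul_const hν)
    rw [mem_limsup_iff_frequently_mem] at hlim
    exact frequently_atTop.1 hlim
  filter_upwards [ae_all_iff.2 fun k : ℕ => fixed_radius (1 / ((k : ℝ) + 1)) Nat.one_div_pos_of_nat]
    with ω hω δ hδ N
  obtain ⟨k, hk⟩ := exists_nat_one_div_lt hδ
  obtain ⟨n, hn, hmem⟩ := hω k N
  exact ⟨n, hn, Metric.ball_subset_ball hk.le hmem⟩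
end
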